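/- (Generalised Lanczos identity) Let X be a (2,2) double form on 4-dimensional Minkowski space which is irreducible in the sense that there exist signs ε, ε' ∈ {1, −1} with X_{cdab} = ε X_{abcd} and (→⋆X)_{cdab} = ε' (→⋆X)_{abcd} for all indices. Then for all a,b: X^{a k₁ k₂ k₃} X_{b k₁ k₂ k₃} = I δ^{a}_{b}, where I = (1/4) X_{pqrs} X^{pqrs} and all indices are raised with η. -/

import Mathlib

/-!
For 2-forms in Lorentzian signature, `F^{ac} G_{bc} - ⋆G^{ac} ⋆F_{bc} = ½ (F·G) δ^a_b`, and the
trace of this identity gives `⋆F·⋆G = -F·G`. Apply the first to the left pair of `X` and the second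
to the right pair. Irreducibility forces `←⋆X = ±→⋆X`, so `←⋆X^{akcd} ←⋆X_{bkcd}` equals
`-X^{akcd} X_{bkcd}`, and the first identity becomes `2 X^{akcd} X_{bkcd} = ½ (X·X) δ^a_b`.
-/

noncomputable section

/-- The Minkowski metric `η = diag(+1,−1,−1,−1)` on `ℝ⁴`.  Its inverse has the
same components, so `mink` is also used to raise indices. -/
def mink : Fin 4 → Fin 4 → ℝ :=
  fun a b => if a = b then (if a = 0 then 1 else -1) else 0

/-- The totally antisymmetric Levi-Civita tensor with all indices down and
`ε₀₁₂₃ = +1`, via the Vandermonde-product formula. -/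
def lev : Fin 4 → Fin 4 → Fin 4 → Fin 4 → ℝ :=
  fun a b c d =>
    (((b : ℕ) : ℝ) - ((a : ℕ) : ℝ)) * (((c : ℕ) : ℝ) - ((a : ℕ) : ℝ)) *
    (((d : ℕ) : ℝ) - ((a : ℕ) : ℝ)) * (((c : ℕ) : ℝ) - ((b : ℕ) : ℝ)) *
    (((d : ℕ) : ℝ) - ((b : ℕ) : ℝ)) * (((d : ℕ) : ℝ) - ((c : ℕ) : ℝ)) / 12

/-- `ε_{ab}{}^{pq}`: the Levi-Civita tensor with its last two indices raised
by the Minkowski metric. -/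
def levUp (a b p q : Fin 4) : ℝ := ∑ r, ∑ s, mink p r * mink q s * lev a b r s

/-- The Kronecker delta on `Fin 4`. -/
def kd (a b : Fin 4) : ℝ := if a = b then 1 else 0

/-- Hodge dual `⋆F_{ab} = (1/2) ε_{ab}{}^{pq} F_{pq}` of a rank-2 tensor. -/
def hodge2 (F : Fin 4 → Fin 4 → ℝ) (a b : Fin 4) : ℝ :=
  (1/2) * ∑ p, ∑ q, levUp a b p q * F p q

/-- Left Hodge dual `←⋆X_{abcd} = (1/2) ε_{ab}{}^{pq} X_{pqcd}`. -/
def leftD (X : Fin 4 → Fin 4 → Fin 4 → Fin 4 → ℝ) (a b c d : Fin 4) : ℝ :=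
  (1/2) * ∑ p, ∑ q, levUp a b p q * X p q c d

/-- Right Hodge dual `→⋆X_{abcd} = (1/2) ε_{cd}{}^{pq} X_{abpq}`. -/
def rightD (X : Fin 4 → Fin 4 → Fin 4 → Fin 4 → ℝ) (a b c d : Fin 4) : ℝ :=
  (1/2) * ∑ p, ∑ q, levUp c d p q * X a b p q

/-- Double Hodge dual `⋆⋆X_{abcd} = (1/4) ε_{ab}{}^{pq} ε_{cd}{}^{rs} X_{pqrs}`. -/
def dblD (X : Fin 4 → Fin 4 → Fin 4 → Fin 4 → ℝ) (a b c d : Fin 4) : ℝ :=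
  (1/4) * ∑ p, ∑ q, ∑ r, ∑ s, levUp a b p q * levUp c d r s * X p q r s

/-- First trace `X_{ac} = η^{bd} X_{abcd}` of a (2,2) double form. -/
def tr1 (X : Fin 4 → Fin 4 → Fin 4 → Fin 4 → ℝ) (a c : Fin 4) : ℝ :=
  ∑ b, ∑ d, mink b d * X a b c d

/-- Second trace `X = η^{ac} X_{ac}` of a (2,2) double form. -/
def tr2 (X : Fin 4 → Fin 4 → Fin 4 → Fin 4 → ℝ) : ℝ :=
  ∑ a, ∑ c, mink a c * tr1 X a c

/-- Hatted (trace-free) tensor `X̂_{ab} = X_{ab} − (1/4) X η_{ab}`. -/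
def hatT (X : Fin 4 → Fin 4 → Fin 4 → Fin 4 → ℝ) (a b : Fin 4) : ℝ :=
  tr1 X a b - (1/4) * tr2 X * mink a b

/-- Rank-2 tensor with both indices raised by the Minkowski metric. -/
def up2 (F : Fin 4 → Fin 4 → ℝ) (a b : Fin 4) : ℝ :=
  ∑ p, ∑ q, mink a p * mink b q * F p q

/-- Rank-4 tensor with all indices raised by the Minkowski metric. -/
def up4 (X : Fin 4 → Fin 4 → Fin 4 → Fin 4 → ℝ) (a b c d : Fin 4) : ℝ :=
  ∑ p, ∑ q, ∑ r, ∑ s, mink a p * mink b q * mink c r * mink d s * X p q r s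

/-- The mixed contraction `F^{ac} G_{bc}` of rank-2 tensors. -/
def contract2 (F G : Fin 4 → Fin 4 → ℝ) (a b : Fin 4) : ℝ :=
  ∑ c, up2 F a c * G b c

/-- The Minkowski pairing `F^{ac} G_{ac}` of rank-2 tensors, counting both orders of each index
pair (twice the usual inner product of 2-forms). -/
def pairing2 (F G : Fin 4 → Fin 4 → ℝ) : ℝ :=
  ∑ a, contract2 F G a a

/-- The mixed contraction `X^{a k₁k₂k₃} Y_{b k₁k₂k₃}` of rank-4 tensors. -/
def contract4 (X Y : Fin 4 → Fin 4 → Fin 4 → Fin 4 → ℝ) (a b : Fin 4) : ℝ :=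
  ∑ k₁, ∑ k₂, ∑ k₃, up4 X a k₁ k₂ k₃ * Y b k₁ k₂ k₃

/-- The Minkowski pairing `X^{pqrs} Y_{pqrs}` of rank-4 tensors. -/
def pairing4 (X Y : Fin 4 → Fin 4 → Fin 4 → Fin 4 → ℝ) : ℝ :=
  ∑ a, contract4 X Y a a

theorem sum_mink_mul (a : Fin 4) (f : Fin 4 → ℝ) : ∑ b, mink a b * f b = mink a a * f a := by
  simp [mink]

theorem levUp_eq (a b p q : Fin 4) : levUp a b p q = mink p p * mink q q * lev a b p q := by
  simp only [levUp, mul_assoc, ← Finset.mul_sum, sum_mink_mul]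

theorem up2_eq (F : Fin 4 → Fin 4 → ℝ) (a b : Fin 4) :
    up2 F a b = mink a a * mink b b * F a b := by
  simp only [up2, mul_assoc, ← Finset.mul_sum, sum_mink_mul]

theorem up4_eq (X : Fin 4 → Fin 4 → Fin 4 → Fin 4 → ℝ) (a b c d : Fin 4) :
    up4 X a b c d = mink a a * mink b b * mink c c * mink d d * X a b c d := by
  simp only [up4, mul_assoc, ← Finset.mul_sum, sum_mink_mul]

section TwoForms

variable {F G : Fin 4 → Fin 4 → ℝ}

theorem eq_components_of_skew (hF : ∀ a b, F a b = -F b a) :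
    F = ![![0, F 0 1, F 0 2, F 0 3],
          ![-F 0 1, 0, F 1 2, F 1 3],
          ![-F 0 2, -F 1 2, 0, F 2 3],
          ![-F 0 3, -F 1 3, -F 2 3, 0]] := by
  have hdiag (a : Fin 4) : F a a = 0 := self_eq_neg.mp (hF a a)
  funext a b
  fin_cases a <;> fin_cases b <;> first | exact hdiag _ | exact hF _ _ | rfl

theorem hodge2_eq_components_of_skew (hF : ∀ a b, F a b = -F b a) :
    hodge2 F = ![![0, F 2 3, -F 1 3, F 1 2],
                 ![-F 2 3, 0, -F 0 3, F 0 2],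
                 ![F 1 3, F 0 3, 0, -F 0 1],
                 ![-F 1 2, -F 0 2, F 0 1, 0]] := by
  funext a b
  fin_cases a <;> fin_cases b <;>
    simp [hodge2, levUp_eq, lev, mink, Fin.sum_univ_four,
      hF 1 0, hF 2 0, hF 3 0, hF 2 1, hF 3 1, hF 3 2] <;>
    ring

theorem contract2_sub_contract2_hodge2 (hF : ∀ a b, F a b = -F b a)
    (hG : ∀ a b, G a b = -G b a) (a b : Fin 4) :
    contract2 F G a b - contract2 (hodge2 G) (hodge2 F) a b = 1 / 2 * pairing2 F G * kd a b := by
  rw [hodge2_eq_components_of_skew hF, hodge2_eq_components_of_skew hG,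
    eq_components_of_skew hF, eq_components_of_skew hG]
  fin_cases a <;> fin_cases b <;>
    simp [contract2, pairing2, up2_eq, mink, kd, Fin.sum_univ_four] <;>
    ring

theorem pairing2_comm (F G : Fin 4 → Fin 4 → ℝ) : pairing2 F G = pairing2 G F := by
  simp only [pairing2, contract2, up2_eq, mul_assoc, mul_comm (F _ _)]

theorem pairing2_hodge2_hodge2 (hF : ∀ a b, F a b = -F b a) (hG : ∀ a b, G a b = -G b a) :
    pairing2 (hodge2 F) (hodge2 G) = -pairing2 F G := by
  have htrace : pairing2 G F - pairing2 (hodge2 F) (hodge2 G) = 2 * pairing2 G F :=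
    calc pairing2 G F - pairing2 (hodge2 F) (hodge2 G)
        = ∑ a, 1 / 2 * pairing2 G F * kd a a := by
          rw [pairing2, pairing2, ← Finset.sum_sub_distrib]
          exact Finset.sum_congr rfl fun a _ => contract2_sub_contract2_hodge2 hG hF a a
      _ = 2 * pairing2 G F := by
          simp only [kd, if_true, Finset.sum_const, Finset.card_univ, Fintype.card_fin]
          ring
  rw [pairing2_comm F G]
  linarith

end TwoForms

section DoubleForms

variable (X Y : Fin 4 → Fin 4 → Fin 4 → Fin 4 → ℝ)

theorem contract4_eq_sum_contract2 (a b : Fin 4) :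
    contract4 X Y a b = ∑ c, ∑ d, mink c c * mink d d *
      contract2 (fun p q => X p q c d) (fun p q => Y p q c d) a b := by
  simp only [contract4, contract2, up4_eq, up2_eq, Finset.mul_sum]
  rw [Finset.sum_comm]
  refine Finset.sum_congr rfl fun c _ => ?_
  rw [Finset.sum_comm]
  refine Finset.sum_congr rfl fun d _ => Finset.sum_congr rfl fun k _ => ?_
  ring

theorem contract4_eq_sum_pairing2 (a b : Fin 4) :
    contract4 X Y a b = ∑ k, mink a a * mink k k * pairing2 (X a k) (Y b k) := by
  simp only [contract4, pairing2, contract2, up4_eq, up2_eq, Finset.mul_sum, mul_assoc]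

theorem pairing4_eq_sum_pairing2 :
    pairing4 X Y = ∑ c, ∑ d, mink c c * mink d d *
      pairing2 (fun p q => X p q c d) (fun p q => Y p q c d) := by
  simp only [pairing4, contract4_eq_sum_contract2, pairing2, Finset.mul_sum]
  rw [Finset.sum_comm]
  exact Finset.sum_congr rfl fun _ _ => Finset.sum_comm

theorem contract4_smul_smul (s t : ℝ) (a b : Fin 4) :
    contract4 (s • X) (t • Y) a b = s * t * contract4 X Y a b := by
  simp only [contract4, up4_eq, Pi.smul_apply, smul_eq_mul, Finset.mul_sum]
  refine Finset.sum_congr rfl fun _ _ => Finset.sum_congr rfl fun _ _ =>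
    Finset.sum_congr rfl fun _ _ => ?_
  ring

variable {X Y}

theorem contract4_sub_contract4_leftD (hX : ∀ a b c d, X a b c d = -X b a c d)
    (hY : ∀ a b c d, Y a b c d = -Y b a c d) (a b : Fin 4) :
    contract4 X Y a b - contract4 (leftD Y) (leftD X) a b = 1 / 2 * pairing4 X Y * kd a b := by
  simp only [contract4_eq_sum_contract2, pairing4_eq_sum_pairing2, ← Finset.sum_sub_distrib,
    Finset.mul_sum, Finset.sum_mul]
  refine Finset.sum_congr rfl fun c _ => Finset.sum_congr rfl fun d _ => ?_
  have h := contract2_sub_contract2_hodge2 (fun p q => hX p q c d) (fun p q => hY p q c d) a b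
  change _ - mink c c * mink d d * contract2 (hodge2 fun p q => Y p q c d)
    (hodge2 fun p q => X p q c d) a b = _
  linear_combination mink c c * mink d d * h

theorem contract4_rightD_rightD (hX : ∀ a b c d, X a b c d = -X a b d c)
    (hY : ∀ a b c d, Y a b c d = -Y a b d c) (a b : Fin 4) :
    contract4 (rightD X) (rightD Y) a b = -contract4 X Y a b := by
  simp only [contract4_eq_sum_pairing2, ← Finset.sum_neg_distrib, ← mul_neg]
  refine Finset.sum_congr rfl fun k _ => ?_
  rw [← pairing2_hodge2_hodge2 (hX a k) (hY b k)]
  rfl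

theorem leftD_eq_smul_rightD {e e' : ℝ} (he : e ^ 2 = 1)
    (hX : ∀ a b c d, X c d a b = e * X a b c d)
    (hR : ∀ a b c d, rightD X c d a b = e' * rightD X a b c d) :
    leftD X = (e * e') • rightD X := by
  have hL (a b c d) : rightD X c d a b = e * leftD X a b c d := by
    simp only [rightD, leftD, hX _ _ c d, Finset.mul_sum, mul_left_comm e]
  funext a b c d
  calc leftD X a b c d = e * (e * leftD X a b c d) := by rw [← mul_assoc, ← sq, he, one_mul]
    _ = e * (e' * rightD X a b c d) := by rw [← hL, hR]
    _ = ((e * e') • rightD X) a b c d := (mul_assoc e e' _).symm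

end DoubleForms

theorem generalised_lanczos_general (X : Fin 4 → Fin 4 → Fin 4 → Fin 4 → ℝ)
    (h1 : ∀ a b c d, X a b c d = -X b a c d)
    (h2 : ∀ a b c d, X a b c d = -X a b d c)
    {σ : ℝ} (hσ : σ ^ 2 = 1) (hdual : leftD X = σ • rightD X) (a b : Fin 4) :
    (∑ k₁, ∑ k₂, ∑ k₃, up4 X a k₁ k₂ k₃ * X b k₁ k₂ k₃) =
      ((1/4) * ∑ p, ∑ q, ∑ r, ∑ s, X p q r s * up4 X p q r s) * kd a b := by
  have hleft : contract4 (leftD X) (leftD X) a b = -contract4 X X a b := by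
    rw [hdual, contract4_smul_smul, ← sq, hσ, one_mul, contract4_rightD_rightD h2 h2]
  have hself : contract4 X X a b = 1 / 4 * pairing4 X X * kd a b := by
    linarith [contract4_sub_contract4_leftD h1 h1 a b]
  simp only [mul_comm (X _ _ _ _)]
  exact hself

/-- Generalised Lanczos identity: for an irreducible (2,2) double form `X`
(one which, together with its right Hodge dual, is either symmetric or
antisymmetric under interchange of the two skew pairs),
`X^{a k₁k₂k₃} X_{b k₁k₂k₃} = I δ^{a}_{b}` with `I = (1/4) X_{pqrs} X^{pqrs}`. -/
theorem generalised_lanczos (X : Fin 4 → Fin 4 → Fin 4 → Fin 4 → ℝ)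
    (h1 : ∀ a b c d, X a b c d = -X b a c d)
    (h2 : ∀ a b c d, X a b c d = -X a b d c)
    (hirr : ∃ e e' : ℝ, (e = 1 ∨ e = -1) ∧ (e' = 1 ∨ e' = -1) ∧
      (∀ a b c d, X c d a b = e * X a b c d) ∧
      (∀ a b c d, rightD X c d a b = e' * rightD X a b c d)) :
    ∀ a b, (∑ k₁, ∑ k₂, ∑ k₃, up4 X a k₁ k₂ k₃ * X b k₁ k₂ k₃) =
      ((1/4) * ∑ p, ∑ q, ∑ r, ∑ s, X p q r s * up4 X p q r s) * kd a b := by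
  obtain ⟨e, e', he, he', hX, hR⟩ := hirr
  rw [← sq_eq_one_iff] at he he'
  exact generalised_lanczos_general X h1 h2
    (by rw [mul_pow, he, he', one_mul]) (leftD_eq_smul_rightD he hX hR)
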